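/- Let n ≥ 1, s > 0 a real number, z ∈ ℍ a unit quaternion, A ∈ M_n(ℍ) with Aᴴ·A = 1, and g := diag(s·z, A, s⁻¹·z) ∈ M_{n+2}(ℍ). Then for every x ∈ ℍⁿ, g·X(x)·g⁻¹ = X(x′), where x′ ∈ ℍⁿ is determined by conj(x′_a) = s⁻¹·(Σ_{b=1}^{n} A_{a,b}·conj(x_b))·conj(z) for each 1 ≤ a ≤ n. -/

import Mathlib

open Quaternion Matrix

noncomputable section

def iq : ℍ[ℝ] := ⟨0,1,0,0⟩
def jq : ℍ[ℝ] := ⟨0,0,1,0⟩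
def kq : ℍ[ℝ] := ⟨0,0,0,1⟩

/-- The `ℂ`-part `u` in the decomposition `q = u + j·v`. -/
def Qc (q : ℍ[ℝ]) : ℂ := ⟨q.re, q.imI⟩

/-- The `ℂ`-part `v` in the decomposition `q = u + j·v`. -/
def Qj (q : ℍ[ℝ]) : ℂ := ⟨q.imJ, -q.imK⟩

/-- Embedding of `ℂ` into the quaternions. -/
def toH (u : ℂ) : ℍ[ℝ] := ⟨u.re, u.im, 0, 0⟩

/-- `φ : M_m(ℍ) → M_{2m}(ℂ)`, `U + jV ↦ [[U, -conj V],[V, conj U]]`. -/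
def phi (m : ℕ) (M : Matrix (Fin m) (Fin m) ℍ[ℝ]) :
    Matrix (Fin m ⊕ Fin m) (Fin m ⊕ Fin m) ℂ :=
  Matrix.fromBlocks (M.map Qc) (-((M.map Qj).map (starRingEnd ℂ)))
    (M.map Qj) ((M.map Qc).map (starRingEnd ℂ))

/-- The index `a + 1` of `Fin (n+2)`, for `a : Fin n` (the "middle" indices `1,…,n`). -/
def mid {n : ℕ} (a : Fin n) : Fin (n+2) := ⟨a.val + 1, by omega⟩

def JQ (n : ℕ) : Matrix (Fin (n+2)) (Fin (n+2)) ℍ[ℝ] :=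
  fun r c =>
    if (r = 0 ∧ c = Fin.last (n+1)) ∨ (r = Fin.last (n+1) ∧ c = 0)
      ∨ (r = c ∧ r ≠ 0 ∧ r ≠ Fin.last (n+1)) then 1 else 0

def JC (n : ℕ) : Matrix (Fin (n+2)) (Fin (n+2)) ℂ :=
  fun r c =>
    if (r = 0 ∧ c = Fin.last (n+1)) ∨ (r = Fin.last (n+1) ∧ c = 0)
      ∨ (r = c ∧ r ≠ 0 ∧ r ≠ Fin.last (n+1)) then 1 else 0

def Jt (n : ℕ) : Matrix (Fin (n+2) ⊕ Fin (n+2)) (Fin (n+2) ⊕ Fin (n+2)) ℂ :=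
  Matrix.fromBlocks (JC n) 0 0 (JC n)

/-- Extend a vector indexed by `1,…,n` by zero to an index `0,…,n+1`. -/
def extC (n : ℕ) (y : Fin n → ℂ) : Fin (n+2) → ℂ :=
  fun r => if h : 1 ≤ r.val ∧ r.val ≤ n then y ⟨r.val - 1, by omega⟩ else 0

def extH (n : ℕ) (x : Fin n → ℍ[ℝ]) : Fin (n+2) → ℍ[ℝ] :=
  fun r => if h : 1 ≤ r.val ∧ r.val ≤ n then x ⟨r.val - 1, by omega⟩ else 0

/-- The degree `-1` matrix `X(x)`, `X(x)_{a,0} = conj x_a`, `X(x)_{n+1,a} = -x_a`. -/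
def Xm (n : ℕ) (x : Fin n → ℍ[ℝ]) : Matrix (Fin (n+2)) (Fin (n+2)) ℍ[ℝ] :=
  fun r c =>
    if c = 0 then extH n (fun a => star (x a)) r
    else if r = Fin.last (n+1) then -(extH n x c) else 0

/-- The degree `-2` matrix `P(p)`, whose only nonzero entry is `P(p)_{n+1,0} = -p`. -/
def Pm (n : ℕ) (p : ℍ[ℝ]) : Matrix (Fin (n+2)) (Fin (n+2)) ℍ[ℝ] :=
  fun r c => if r = Fin.last (n+1) ∧ c = 0 then -p else 0

/-- The block-diagonal matrix `diag(s·z, A, s⁻¹·z)`. -/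
def gD (n : ℕ) (s : ℝ) (z : ℍ[ℝ]) (A : Matrix (Fin n) (Fin n) ℍ[ℝ]) :
    Matrix (Fin (n+2)) (Fin (n+2)) ℍ[ℝ] :=
  fun r c =>
    if r = 0 ∧ c = 0 then (s : ℍ[ℝ]) * z
    else if r = Fin.last (n+1) ∧ c = Fin.last (n+1) then ((s⁻¹ : ℝ) : ℍ[ℝ]) * z
    else if h : (1 ≤ r.val ∧ r.val ≤ n) ∧ (1 ≤ c.val ∧ c.val ≤ n) then
      A ⟨r.val - 1, by omega⟩ ⟨c.val - 1, by omega⟩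
    else 0

theorem sum_three (n : ℕ) (f : Fin (n+2) → ℍ[ℝ]) :
    ∑ i, f i = f 0 + ∑ a : Fin n, f (mid a) + f (Fin.last (n+1)) := by
  rw [Fin.sum_univ_succ, Fin.sum_univ_castSucc, ← add_assoc]
  rfl

theorem cases_three {n : ℕ} (r : Fin (n+2)) :
    r = 0 ∨ (∃ a : Fin n, r = mid a) ∨ r = Fin.last (n+1) := by
  by_cases h0 : r.val = 0
  · exact Or.inl (Fin.ext h0)
  · by_cases h1 : r.val = n + 1
    · exact Or.inr (Or.inr (Fin.ext h1))
    · refine Or.inr (Or.inl ⟨⟨r.val - 1, by omega⟩, Fin.ext ?_⟩)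
      simp only [mid]
      omega

theorem mid_ne_zero {n : ℕ} (a : Fin n) : mid a ≠ 0 := by
  intro h
  have := congrArg Fin.val h
  simp [mid] at this

theorem mid_ne_last {n : ℕ} (a : Fin n) : mid a ≠ Fin.last (n+1) := by
  intro h
  have := congrArg Fin.val h
  simp [mid] at this
  omega

theorem last_ne_zero' {n : ℕ} : Fin.last (n+1) ≠ 0 := by
  intro h
  have := congrArg Fin.val h
  simp at this

theorem zero_ne_last' {n : ℕ} : (0 : Fin (n+2)) ≠ Fin.last (n+1) := last_ne_zero'.symm

theorem extH_zero (n : ℕ) (x : Fin n → ℍ[ℝ]) : extH n x 0 = 0 := by simp [extH]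
theorem extH_last (n : ℕ) (x : Fin n → ℍ[ℝ]) : extH n x (Fin.last (n+1)) = 0 := by
  simp [extH]
theorem extH_mid (n : ℕ) (x : Fin n → ℍ[ℝ]) (a : Fin n) : extH n x (mid a) = x a := by
  have : a.val + 1 ≤ n := a.isLt
  simp [extH, mid, this]

section
variable (n : ℕ) (s : ℝ) (z : ℍ[ℝ]) (A : Matrix (Fin n) (Fin n) ℍ[ℝ])

theorem gD_00 : gD n s z A 0 0 = (s : ℍ[ℝ]) * z := by simp [gD]
theorem gD_0m (a : Fin n) : gD n s z A 0 (mid a) = 0 := by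
  simp [gD, mid_ne_zero, mid_ne_last]
theorem gD_0l : gD n s z A 0 (Fin.last (n+1)) = 0 := by
  simp [gD, last_ne_zero', zero_ne_last']
theorem gD_m0 (a : Fin n) : gD n s z A (mid a) 0 = 0 := by
  simp [gD, mid_ne_zero, mid_ne_last]
theorem gD_mm (a b : Fin n) : gD n s z A (mid a) (mid b) = A a b := by
  have h1 : a.val + 1 ≤ n := a.isLt
  have h2 : b.val + 1 ≤ n := b.isLt
  simp only [gD, mid_ne_zero, mid_ne_last]
  simp [mid, h1, h2]
theorem gD_ml (a : Fin n) : gD n s z A (mid a) (Fin.last (n+1)) = 0 := by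
  simp [gD, mid_ne_zero, mid_ne_last]
theorem gD_l0 : gD n s z A (Fin.last (n+1)) 0 = 0 := by
  simp [gD, last_ne_zero', zero_ne_last']
theorem gD_lm (a : Fin n) : gD n s z A (Fin.last (n+1)) (mid a) = 0 := by
  simp [gD, mid_ne_zero, mid_ne_last]
theorem gD_ll : gD n s z A (Fin.last (n+1)) (Fin.last (n+1)) = ((s⁻¹ : ℝ) : ℍ[ℝ]) * z := by
  simp [gD, last_ne_zero']
end

/-- `g·X(x)·g⁻¹ = X(x′)` where `conj(x′_a) = s⁻¹·(Σ_b A_{a,b}·conj(x_b))·conj(z)`. -/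
theorem stmt8 (n : ℕ) (hn : 1 ≤ n) (s : ℝ) (hs : 0 < s) (z : ℍ[ℝ]) (hz : ‖z‖ = 1)
    (A : Matrix (Fin n) (Fin n) ℍ[ℝ]) (hA : Aᴴ * A = 1) (x : Fin n → ℍ[ℝ]) :
    ∀ x' : Fin n → ℍ[ℝ],
      (∀ a : Fin n, star (x' a) =
        ((s⁻¹ : ℝ) : ℍ[ℝ]) * (∑ b : Fin n, A a b * star (x b)) * star z) →
      gD n s z A * Xm n x * gD n s⁻¹ (star z) Aᴴ = Xm n x' := by
  intro x' hx'
  have hx2 : ∀ a : Fin n, x' a =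
      z * (∑ b : Fin n, x b * star (A a b)) * ((s⁻¹ : ℝ) : ℍ[ℝ]) := by
    intro a
    rw [← star_star (x' a), hx' a, star_mul, star_mul, star_star, star_sum, ← mul_assoc,
      Quaternion.star_coe]
    simp only [star_mul, star_star]
  ext1 r c
  rcases cases_three r with rfl | ⟨a, rfl⟩ | rfl <;>
  rcases cases_three c with rfl | ⟨b, rfl⟩ | rfl <;>
  simp only [Matrix.mul_apply, sum_three, gD_00, gD_0m, gD_0l, gD_m0, gD_mm, gD_ml, gD_l0,
    gD_lm, gD_ll, Xm, extH_zero, extH_last, extH_mid, mid_ne_zero, mid_ne_last, last_ne_zero',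
    zero_ne_last', if_true, if_false, mul_zero, zero_mul, add_zero, zero_add, neg_zero,
    Finset.sum_const_zero]
  · rw [hx' a, ← mul_assoc, Quaternion.coe_commutes]
  · rw [hx2 b, ← Quaternion.coe_commutes, Finset.mul_sum, Finset.mul_sum, ← Finset.sum_neg_distrib]
    refine Finset.sum_congr rfl fun i _ => ?_
    simp only [Matrix.conjTranspose_apply, mul_neg, neg_mul, mul_assoc]
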